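/- (Remark 3.1) Suppose X^n ⊂ ℝ^2 is in general position (no line contains more than 2 of the points) and n ≥ 3. Then the finite sample additional breakdown point of Tukey's halfspace median is ε(T*, X^n) = ⌈n/2⌉ / (n + ⌈n/2⌉). -/

import Mathlib

open scoped RealInnerProductSpace
open MeasureTheory

noncomputable section

/-- `E d` is the Euclidean space `ℝ^d`. -/
abbrev E (d : ℕ) : Type := EuclideanSpace ℝ (Fin d)

/-- A sample `X` of `n` points in `ℝ^d` is in general position if no affine hyperplane
(encoded as `{x | ⟪v, x⟫ = c}` for some `v ≠ 0`) contains more than `d` of the points. -/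
def inGeneralPosition {d n : ℕ} (X : Fin n → E d) : Prop :=
  ∀ v : E d, v ≠ 0 → ∀ c : ℝ, ({i : Fin n | ⟪v, X i⟫ = c} : Set (Fin n)).ncard ≤ d

/-- Number of sample points in the closed halfspace `{z | ⟪u, z⟫ ≤ ⟪u, x⟫}`. -/
def sideCount {d n : ℕ} (X : Fin n → E d) (u x : E d) : ℕ :=
  ({i : Fin n | ⟪u, X i⟫ ≤ ⟪u, x⟫} : Set (Fin n)).ncard

/-- Tukey's halfspace depth of `x` with respect to the sample `X`. -/
def depth {d n : ℕ} (X : Fin n → E d) (x : E d) : ℝ :=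
  sInf {r : ℝ | ∃ u : E d, ‖u‖ = 1 ∧ r = (sideCount X u x : ℝ) / (n : ℝ)}

/-- The maximum Tukey depth `λ*` of the sample `X`. -/
def maxDepth {d n : ℕ} (X : Fin n → E d) : ℝ :=
  sSup (Set.range (depth X))

/-- The set `M(X)` of deepest points. -/
def MSet {d n : ℕ} (X : Fin n → E d) : Set (E d) :=
  {x | depth X x = maxDepth X}

/-- `U_x`: the set of optimal (unit) directions realizing the depth at `x`. -/
def USet {d n : ℕ} (X : Fin n → E d) (x : E d) : Set (E d) :=
  {u | ‖u‖ = 1 ∧ (sideCount X u x : ℝ) / (n : ℝ) = depth X x}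

/-- `H_{x,y}`: the open hemisphere of unit directions `u` with `⟪u, x⟫ < ⟪u, y⟫`. -/
def HSet {d : ℕ} (x y : E d) : Set (E d) :=
  {u | ‖u‖ = 1 ∧ ⟪u, x⟫ < ⟪u, y⟫}

/-- `B_z`. -/
def BSet {d n : ℕ} (X : Fin n → E d) (z : E d) : Set (E d) :=
  {x | x ∈ MSet X ∧ USet X x ∩ HSet x z = ∅}

/-- `B̃_z = B_z \ {z}`. -/
def BTilde {d n : ℕ} (X : Fin n → E d) (z : E d) : Set (E d) :=
  BSet X z \ {z}

/-- `v` is a unit vector normal to an affine hyperplane spanned by `d` of the sample points. -/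
def normalToSampleHyperplane {d n : ℕ} (X : Fin n → E d) (v : E d) : Prop :=
  ‖v‖ = 1 ∧ ∃ (s : Finset (Fin n)) (c : ℝ), s.card = d ∧
    (affineSpan ℝ (X '' (s : Set (Fin n))) : Set (E d)) = {x : E d | ⟪v, x⟫ = c}

/-- Condition (2.1) on a unit direction `u`. -/
def cond21 {d n : ℕ} (X : Fin n → E d) (u : E d) : Prop :=
  ∀ v : E d, normalToSampleHyperplane X v → ⟪u, v⟫ ≠ 0

/-- `A` represents the columns of a `d × (d-1)` matrix which together with the unit
vector `u` form an orthonormal basis of `ℝ^d`. -/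
def IsAu {d : ℕ} (u : E d) (A : Fin (d - 1) → E d) : Prop :=
  ‖u‖ = 1 ∧ Orthonormal ℝ A ∧ ∀ j, ⟪A j, u⟫ = 0

/-- The `A_u`-projection `A_u^T x ∈ ℝ^{d-1}` of a point `x ∈ ℝ^d`. -/
def proj {d : ℕ} (A : Fin (d - 1) → E d) (x : E d) : E (d - 1) :=
  (WithLp.equiv 2 (Fin (d - 1) → ℝ)).symm (fun j => ⟪A j, x⟫)

/-- The embedding `A_u x = ∑ j x_j A_j ∈ ℝ^d` of a point `x ∈ ℝ^{d-1}`. -/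
def embed {d : ℕ} (A : Fin (d - 1) → E d) (x : E (d - 1)) : E d :=
  ∑ j, x j • A j

/-- `λ₀ = inf_{u ∈ S^{d-1}} λ*(X_u^n)`, the infimum over all directions of the maximum
Tukey depth of the projected sample. -/
def lambda0 {d n : ℕ} (X : Fin n → E d) : ℝ :=
  sInf {r : ℝ | ∃ (u : E d) (A : Fin (d - 1) → E d),
    IsAu u A ∧ r = maxDepth (fun i => proj A (X i))}

/-- The average (barycenter) of a set `K ⊆ ℝ^d`, taken with respect to the Hausdorff
measure of dimension equal to the affine dimension of `K`. -/
def setAverage {d : ℕ} (K : Set (E d)) : E d :=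
  (μH[(Module.finrank ℝ (affineSpan ℝ K).direction : ℝ)] K).toReal⁻¹ •
    ∫ x in K, x ∂(μH[(Module.finrank ℝ (affineSpan ℝ K).direction : ℝ)])

/-- Tukey's halfspace median: the average of all deepest points. -/
def TukeyMedian {d n : ℕ} (X : Fin n → E d) : E d :=
  setAverage (MSet X)

/-- `m` contaminating points suffice to break down the Tukey median at `X`. -/
def breaksDown {d n : ℕ} (X : Fin n → E d) (m : ℕ) : Prop :=
  ∀ C : ℝ, ∃ Y : Fin m → E d, C < ‖TukeyMedian (Fin.append X Y) - TukeyMedian X‖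

/-- The finite sample (additional) breakdown point of the Tukey median at `X`. -/
def FSBP {d n : ℕ} (X : Fin n → E d) : ℝ :=
  sInf {r : ℝ | ∃ m : ℕ, 1 ≤ m ∧ breaksDown X m ∧ r = (m : ℝ) / ((n : ℝ) + (m : ℝ))}

/-!
If `d * m < n`, a centerpoint of the contaminated sample, which exists by Helly's theorem, has more
than `m` points in each of its closed halfspaces. The same then holds for every deepest point, so
each of its halfspaces contains a point of `X`, and the median stays in the convex hull of `X`.

If `n ≤ 2 * m` and `2 ≤ d`, put all `m` contaminating points at one far away `y` that is collinear
with no two points of `X`. Then `y` has depth `m / (n + m)`, and no point `x` is deeper: some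
hyperplane through `x` and `y` contains at most one point of `X`, so one of its sides has at most
`⌊(n + 1) / 2⌋ ≤ m` of them, and a slight tilt about `x` moves `y` off that side. Hence the set of
deepest points contains `y`. It may also contain points near `X`, but by convexity its image under
the homothety of ratio `1 / 2` centred at `y` lies in it and has at least `2 ^ (-d)` of its measure,
which drags the barycenter to infinity together with `y`.
-/

section Avoidance

variable {V ι : Type*} [NormedAddCommGroup V] [Finite ι]

lemma exists_lt_norm_pairwise_not_collinear [NormedSpace ℝ V] [FiniteDimensional ℝ V]
    (hV : 1 < Module.finrank ℝ V) {X : ι → V} (hX : Function.Injective X) (C : ℝ) :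
    ∃ y : V, C < ‖y‖ ∧ Pairwise fun i j => ¬ Collinear ℝ {y, X i, X j} := by
  borelize V
  let μ : Measure V := Measure.addHaar
  have hline (i j : ι) : line[ℝ, X i, X j] ≠ ⊤ := by
    intro htop
    have hle : Module.finrank ℝ (vectorSpan ℝ {X i, X j}) ≤ 1 :=
      (collinear_pair ℝ (X i) (X j)).finrank_le_one
    rw [← direction_affineSpan, htop, AffineSubspace.direction_top, finrank_top] at hle
    omega
  have hae : ∀ᵐ y ∂μ, ∀ i j, y ∉ line[ℝ, X i, X j] := by
    simp only [ae_all_iff]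
    exact fun i j =>
      measure_eq_zero_iff_ae_notMem.1 (Measure.addHaar_affineSubspace μ _ (hline i j))
  have hfar : ∃ᵐ y ∂μ, C < ‖y‖ := by
    have : Nontrivial V := Module.nontrivial_of_finrank_pos (R := ℝ) (by omega)
    exact frequently_ae_iff.2 ((isOpen_lt continuous_const continuous_norm).measure_ne_zero μ
      (NormedSpace.exists_lt_norm ℝ V C))
  obtain ⟨y, hyC, hy⟩ := (hfar.and_eventually hae).exists
  refine ⟨y, hyC, fun i j hij hcol => hy i j ?_⟩
  exact hcol.mem_affineSpan_of_mem_of_ne (by simp) (by simp) (by simp) (hX.ne hij)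

variable [InnerProductSpace ℝ V]

lemma exists_mem_orthogonal_forall_inner_ne_zero (K : Submodule ℝ V) [K.HasOrthogonalProjection]
    (w : ι → V) : ∃ p ∈ Kᗮ, ∀ i, w i ∉ K → ⟪p, w i⟫ ≠ 0 := by
  have hsep (i : {i // w i ∉ K}) : ∃ p ∈ Kᗮ, innerₗ V (w i) p ≠ 0 := by
    by_contra! hzero
    have hdouble : w i ∈ Kᗮᗮ := (Submodule.mem_orthogonal' _ _).2 hzero
    exact i.2 (by rwa [K.orthogonal_orthogonal] at hdouble)
  obtain ⟨p, hpK, hp⟩ := Module.Dual.exists_forall_mem_ne_zero_of_forall_exists Kᗮ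
    (fun i : {i // w i ∉ K} => innerₗ V (w i)) hsep
  exact ⟨p, hpK, fun i hi => real_inner_comm p (w i) ▸ hp ⟨i, hi⟩⟩

/- For generic `p` orthogonal to `x - y`, the hyperplane through `x` with normal `p` meets the
sample only on the line through `x` and `y`. -/
lemma exists_inner_eq_ncard_inner_eq_le_one {X : ι → V} {y : V}
    (hy : Pairwise fun i j => ¬ Collinear ℝ {y, X i, X j}) (x : V) :
    ∃ p : V, ⟪p, y⟫ = ⟪p, x⟫ ∧ {i | ⟪p, X i⟫ = ⟪p, x⟫}.ncard ≤ 1 := by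
  obtain ⟨p, hpK, hp⟩ :=
    exists_mem_orthogonal_forall_inner_ne_zero (ℝ ∙ (x - y)) (fun i => X i - y)
  have hpxy : ⟪p, y⟫ = ⟪p, x⟫ := by
    have := (Submodule.mem_orthogonal_singleton_iff_inner_left (𝕜 := ℝ)).1 hpK
    rw [inner_sub_right] at this
    linarith
  have hmem {i : ι} (hi : ⟪p, X i⟫ = ⟪p, x⟫) : ∃ r : ℝ, X i = r • (x - y) + y := by
    have hspan : X i - y ∈ ℝ ∙ (x - y) := by
      by_contra hnot
      exact hp i hnot (by rw [inner_sub_right, hi, hpxy, sub_self])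
    obtain ⟨r, hr⟩ := Submodule.mem_span_singleton.1 hspan
    exact ⟨r, by rw [hr, sub_add_cancel]⟩
  refine ⟨p, hpxy, (Set.ncard_le_one (Set.toFinite _)).2 fun i hi j hj => ?_⟩
  by_contra hij
  refine hy hij ((collinear_iff_of_mem (Set.mem_insert y _)).2 ⟨x - y, ?_⟩)
  rintro q (rfl | rfl | rfl)
  · exact ⟨0, by simp⟩
  · exact hmem hi
  · exact hmem hj

end Avoidance

section Barycenter

lemma mul_measureReal_div_le_setAverage {α : Type*} [MeasurableSpace α] {μ : Measure α}
    {D K : Set α} {g : α → ℝ} {c : ℝ} (hD : MeasurableSet D) (hK : MeasurableSet K) (hDK : D ⊆ K)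
    (hKμ : μ K ≠ ⊤) (hg : IntegrableOn g K μ) (hg0 : ∀ x ∈ K, 0 ≤ g x) (hgc : ∀ x ∈ D, c ≤ g x) :
    c * (μ.real D / μ.real K) ≤ ⨍ x in K, g x ∂μ := by
  have hconst : c * μ.real D ≤ ∫ x in D, g x ∂μ :=
    setIntegral_ge_of_const_le_real hD (ne_top_of_le_ne_top hKμ (measure_mono hDK)) hgc
      (hg.mono_set hDK)
  have hmono : ∫ x in D, g x ∂μ ≤ ∫ x in K, g x ∂μ :=
    setIntegral_mono_set hg (ae_restrict_of_forall_mem hK hg0) hDK.eventuallyLE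
  rw [setAverage_eq, smul_eq_mul, ← mul_div_assoc, div_eq_inv_mul]
  gcongr
  exact hconst.trans hmono

lemma average_inner_sub {α V : Type*} [MeasurableSpace α] [NormedAddCommGroup V]
    [InnerProductSpace ℝ V] [CompleteSpace V] {μ : Measure α} [IsFiniteMeasure μ] [NeZero μ]
    {f : α → V} (hf : Integrable f μ) (e : V) (r : ℝ) :
    ⨍ x, (⟪e, f x⟫ - r) ∂μ = ⟪e, ⨍ x, f x ∂μ⟫ - r := by
  rw [average_eq, average_eq, integral_sub (hf.const_inner e) (integrable_const r),
    integral_inner hf, smul_sub, real_inner_smul_right, smul_eq_mul, ← average_eq, average_const]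

variable {V : Type*} [NormedAddCommGroup V] [NormedSpace ℝ V] [MeasurableSpace V] [BorelSpace V]

/-- The Hausdorff measure whose dimension is that of the affine hull of `K`. The barycenter of `K`
is taken with respect to it. -/
def affineHullMeasure (K : Set V) : Measure V :=
  μH[(Module.finrank ℝ (affineSpan ℝ K).direction : ℝ)]

lemma hausdorffMeasure_preimage_vaddConst {A : AffineSubspace ℝ V} [Nonempty A] (p : A) {s : ℝ}
    (hs : 0 ≤ s) {K : Set V} (hK : K ⊆ A) :
    μH[s] (IsometryEquiv.vaddConst p ⁻¹' ((↑) ⁻¹' K)) = μH[s] K := by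
  rw [(IsometryEquiv.vaddConst p).isometry.hausdorffMeasure_preimage (.inl hs),
    (IsometryEquiv.vaddConst p).surjective.range_eq, Set.inter_univ,
    isometry_subtype_coe.hausdorffMeasure_preimage (.inl hs), Subtype.range_coe,
    Set.inter_eq_left.2 hK]

variable {K : Set V}

lemma affineHullMeasure_real_homothety_image {y : V} {t : ℝ} (ht : 0 < t) :
    (affineHullMeasure K).real (AffineMap.homothety y t '' K) =
      t ^ Module.finrank ℝ (affineSpan ℝ K).direction * (affineHullMeasure K).real K := by
  rw [Measure.real, affineHullMeasure, hausdorffMeasure_homothety_image (by positivity) y ht.ne']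
  simp [ENNReal.smul_def, Measure.real, abs_of_pos ht]

variable [FiniteDimensional ℝ V]

lemma affineHullMeasure_pos (hK : Convex ℝ K) (hne : K.Nonempty) : 0 < affineHullMeasure K K := by
  obtain ⟨-, p, hp, rfl⟩ := (intrinsicInterior_nonempty hK).2 hne
  have : Nonempty (affineSpan ℝ K) := ⟨p⟩
  rw [affineHullMeasure,
    ← hausdorffMeasure_preimage_vaddConst p (by positivity) (subset_affineSpan ℝ K)]
  refine Measure.measure_pos_of_nonempty_interior _ ⟨0, ?_⟩
  refine preimage_interior_subset_interior_preimage (IsometryEquiv.vaddConst p).continuous ?_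
  simpa using hp

lemma affineHullMeasure_lt_top (hK : IsCompact K) (hne : K.Nonempty) :
    affineHullMeasure K K < ⊤ := by
  obtain ⟨p, hp⟩ := hne.affineSpan ℝ
  have : Nonempty (affineSpan ℝ K) := ⟨⟨p, hp⟩⟩
  rw [affineHullMeasure,
    ← hausdorffMeasure_preimage_vaddConst ⟨p, hp⟩ (by positivity) (subset_affineSpan ℝ K)]
  have hclosed : Topology.IsClosedEmbedding ((↑) : affineSpan ℝ K → V) :=
    (AffineSubspace.closed_of_finiteDimensional _).isClosedEmbedding_subtypeVal
  exact ((IsometryEquiv.vaddConst _).toHomeomorph.isClosedEmbedding.isCompact_preimage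
    (hclosed.isCompact_preimage hK)).measure_lt_top

variable {d : ℕ} {K : Set (E d)}

lemma setAverage_eq_average (K : Set (E d)) :
    setAverage K = ⨍ x in K, x ∂(affineHullMeasure K) :=
  (setAverage_eq _ _ _).symm

lemma norm_setAverage_le {R : ℝ} (hR : 0 ≤ R) (hK : ∀ x ∈ K, ‖x‖ ≤ R) : ‖setAverage K‖ ≤ R := by
  rw [setAverage_eq_average, setAverage_eq]
  rcases measureReal_nonneg (μ := affineHullMeasure K) (s := K) |>.eq_or_lt with hzero | hpos
  · simpa [← hzero] using hR
  · have hfin : affineHullMeasure K K < ⊤ := (ENNReal.toReal_pos_iff.1 hpos).2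
    rw [norm_smul, norm_inv, Real.norm_of_nonneg hpos.le, inv_mul_le_iff₀ hpos, mul_comm]
    exact norm_setIntegral_le_of_norm_le_const hfin hK

/- Halving `K` towards `y` keeps at least the fraction `2 ^ (-d)` of its measure, and on the halved
set `⟪e, ·⟫ - r` is at least half its value at `y`. -/
lemma div_two_pow_le_inner_setAverage_sub (hconv : Convex ℝ K) (hK : IsCompact K) {y e : E d}
    {r : ℝ} (hy : y ∈ K) (hr : ∀ x ∈ K, r ≤ ⟪e, x⟫) :
    (⟪e, y⟫ - r) / 2 ^ (d + 1) ≤ ⟪e, setAverage K⟫ - r := by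
  set μ := affineHullMeasure K
  set D := AffineMap.homothety y (1 / 2 : ℝ) '' K
  have hpos : 0 < μ K := affineHullMeasure_pos hconv ⟨y, hy⟩
  have hfin : μ K < ⊤ := affineHullMeasure_lt_top hK ⟨y, hy⟩
  have hposReal : 0 < μ.real K := ENNReal.toReal_pos hpos.ne' hfin.ne
  have : IsFiniteMeasure (μ.restrict K) := ⟨by simpa using hfin⟩
  have : NeZero (μ.restrict K) := ⟨by simpa using hpos.ne'⟩
  have hint : Integrable (fun x : E d => x) (μ.restrict K) := by
    obtain ⟨B, hB⟩ := hK.isBounded.exists_norm_le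
    exact .of_bound (by fun_prop) B (ae_restrict_of_forall_mem hK.measurableSet hB)
  have havg : ⨍ x in K, (⟪e, x⟫ - r) ∂μ = ⟪e, setAverage K⟫ - r := by
    rw [average_inner_sub hint, setAverage_eq_average]
  have hDK : D ⊆ K := by
    rintro _ ⟨x, hx, rfl⟩
    rw [AffineMap.homothety_eq_lineMap]
    exact hconv.lineMap_mem hy hx ⟨by norm_num, by norm_num⟩
  have hhalf : ∀ x ∈ D, (⟪e, y⟫ - r) / 2 ≤ ⟪e, x⟫ - r := by
    rintro _ ⟨x, hx, rfl⟩
    simp only [AffineMap.homothety_apply, vsub_eq_sub, vadd_eq_add, inner_add_right,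
      real_inner_smul_right, inner_sub_right]
    linarith [hr x hx]
  have hratio : (1 / 2) ^ d ≤ μ.real D / μ.real K := by
    rw [affineHullMeasure_real_homothety_image one_half_pos, mul_div_cancel_right₀ _ hposReal.ne']
    refine pow_le_pow_of_le_one (by norm_num) (by norm_num) ?_
    simpa using Submodule.finrank_le (affineSpan ℝ K).direction
  have hD : MeasurableSet D := (hK.image (AffineMap.homothety_continuous y _)).measurableSet
  calc (⟪e, y⟫ - r) / 2 ^ (d + 1) = (⟪e, y⟫ - r) / 2 * (1 / 2) ^ d := by
        rw [pow_succ, one_div_pow]; field_simp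
    _ ≤ (⟪e, y⟫ - r) / 2 * (μ.real D / μ.real K) := by
        have := sub_nonneg.2 (hr y hy)
        gcongr
    _ ≤ ⨍ x in K, (⟪e, x⟫ - r) ∂μ :=
        mul_measureReal_div_le_setAverage hD hK.measurableSet hDK hfin.ne
          ((hint.const_inner e).sub (integrable_const r)) (fun x hx => sub_nonneg.2 (hr x hx)) hhalf
    _ = ⟪e, setAverage K⟫ - r := havg

lemma le_norm_setAverage_of_subset_convexHull (hconv : Convex ℝ K) (hK : IsCompact K) {y : E d}
    {R : ℝ} (hR : 0 ≤ R) (hy : y ∈ K) (hKy : K ⊆ convexHull ℝ (insert y (Metric.closedBall 0 R))) :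
    (‖y‖ + R) / 2 ^ (d + 1) - R ≤ ‖setAverage K‖ := by
  set e : E d := ‖y‖⁻¹ • y
  have he : ‖e‖ ≤ 1 := mem_closedBall_zero_iff.1 (inv_norm_smul_mem_unitClosedBall y)
  have hinner (x : E d) : |⟪e, x⟫| ≤ ‖x‖ :=
    (abs_real_inner_le_norm e x).trans (mul_le_of_le_one_left (norm_nonneg x) he)
  have hey : ⟪e, y⟫ = ‖y‖ := by
    rw [real_inner_smul_left, real_inner_self_eq_norm_mul_norm, ← mul_assoc, inv_mul_mul_self]
  have hlower : ∀ x ∈ K, -R ≤ ⟪e, x⟫ := by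
    suffices hsub : insert y (Metric.closedBall 0 R) ⊆ {x | -R ≤ ⟪e, x⟫} from fun x hx =>
      convexHull_min hsub (convex_halfSpace_ge (innerₗ (E d) e).isLinear (-R)) (hKy hx)
    rintro x (rfl | hx)
    · exact (neg_nonpos.2 hR).trans ((norm_nonneg _).trans_eq hey.symm)
    · exact (abs_le.1 ((hinner x).trans (mem_closedBall_zero_iff.1 hx))).1
  have hbary := div_two_pow_le_inner_setAverage_sub hconv hK hy hlower
  rw [hey, sub_neg_eq_add, sub_neg_eq_add] at hbary
  linarith [le_abs_self ⟪e, setAverage K⟫, hinner (setAverage K)]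

end Barycenter

section SideCount

variable {d n m : ℕ}

lemma sideCount_eq_card (Z : Fin n → E d) (u x : E d) :
    sideCount Z u x = (Finset.univ.filter fun i => ⟪u, Z i⟫ ≤ ⟪u, x⟫).card := by
  rw [sideCount, Set.ncard_eq_toFinset_card', Set.toFinset_ofPred]

lemma sideCount_le (Z : Fin n → E d) (u x : E d) : sideCount Z u x ≤ n := by
  rw [sideCount_eq_card]
  exact Finset.card_le_univ _ |>.trans_eq (Fintype.card_fin n)

lemma sideCount_zero_left (Z : Fin n → E d) (x : E d) : sideCount Z 0 x = n := by
  simp [sideCount_eq_card]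

lemma sideCount_smul {c : ℝ} (hc : 0 < c) (Z : Fin n → E d) (u x : E d) :
    sideCount Z (c • u) x = sideCount Z u x := by
  simp only [sideCount, real_inner_smul_left, mul_le_mul_iff_right₀ hc]

lemma sideCount_mono {Z : Fin n → E d} {u x y : E d} (h : ⟪u, x⟫ ≤ ⟪u, y⟫) :
    sideCount Z u x ≤ sideCount Z u y :=
  Set.ncard_le_ncard (fun _ hi => hi.trans h) (Set.toFinite _)

lemma sideCount_append (X : Fin n → E d) (Y : Fin m → E d) (u x : E d) :
    sideCount (Fin.append X Y) u x = sideCount X u x + sideCount Y u x := by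
  simp only [sideCount_eq_card, Finset.card_filter, Fin.sum_univ_add, Fin.append_left,
    Fin.append_right]

lemma sideCount_const (u x y : E d) :
    sideCount (fun _ : Fin m => y) u x = if ⟪u, y⟫ ≤ ⟪u, x⟫ then m else 0 := by
  split_ifs with h <;> simp [sideCount, h]

lemma sideCount_add_sideCount_neg (Z : Fin n → E d) (u x : E d) :
    sideCount Z u x + sideCount Z (-u) x = n + {i | ⟪u, Z i⟫ = ⟪u, x⟫}.ncard := by
  have hunion : {i | ⟪u, Z i⟫ ≤ ⟪u, x⟫} ∪ {i | ⟪-u, Z i⟫ ≤ ⟪-u, x⟫} = Set.univ := by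
    ext i
    simpa using le_total ⟪u, Z i⟫ ⟪u, x⟫
  have hinter : {i | ⟪u, Z i⟫ ≤ ⟪u, x⟫} ∩ {i | ⟪-u, Z i⟫ ≤ ⟪-u, x⟫} =
      {i | ⟪u, Z i⟫ = ⟪u, x⟫} := by
    ext i
    simp [le_antisymm_iff]
  rw [sideCount, sideCount, ← Set.ncard_union_add_ncard_inter, hunion, hinter, Set.ncard_univ,
    Nat.card_fin]

lemma upperSemicontinuous_sideCount (Z : Fin n → E d) :
    UpperSemicontinuous fun q : E d × E d => sideCount Z q.1 q.2 := by
  intro q k hk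
  have hsub : ∀ᶠ q' : E d × E d in nhds q, ∀ i, ⟪q.1, q.2⟫ < ⟪q.1, Z i⟫ →
      ⟪q'.1, q'.2⟫ < ⟪q'.1, Z i⟫ := by
    refine Filter.eventually_all.2 fun i => ?_
    by_cases hi : ⟪q.1, q.2⟫ < ⟪q.1, Z i⟫
    · have hopen : IsOpen {q' : E d × E d | ⟪q'.1, q'.2⟫ < ⟪q'.1, Z i⟫} :=
        isOpen_lt (by fun_prop) (by fun_prop)
      exact (hopen.eventually_mem hi).mono fun _ h _ => h
    · exact .of_forall fun _ h => absurd h hi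
  filter_upwards [hsub] with q' hq'
  refine lt_of_le_of_lt (Set.ncard_le_ncard (fun i hi => ?_) (Set.toFinite _)) hk
  exact not_lt.1 fun h => not_lt.2 hi (hq' i h)

lemma exists_sideCount_eq_zero {Z : Fin n → E d} {x : E d} (hx : x ∉ convexHull ℝ (Set.range Z)) :
    ∃ u, sideCount Z u x = 0 := by
  obtain ⟨f, c, hxc, hc⟩ := geometric_hahn_banach_point_closed (convex_convexHull ℝ _)
    ((Set.finite_range Z).isClosed_convexHull ℝ) hx
  refine ⟨(InnerProductSpace.toDual ℝ (E d)).symm f, ?_⟩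
  rw [sideCount, Set.ncard_eq_zero, Set.eq_empty_iff_forall_notMem]
  intro i
  simp only [Set.mem_ofPred_eq, InnerProductSpace.toDual_symm_apply, not_le]
  exact hxc.trans (hc _ (subset_convexHull ℝ _ ⟨i, rfl⟩))

end SideCount

section DepthRegion

variable {d n : ℕ}

/-- Tukey's depth region at level `k / n`: the points all of whose closed halfspaces contain at
least `k` sample points. The normal `u` need not be a unit vector, since `sideCount` is invariant
under positive scaling of `u`, and `u = 0` counts the whole sample. -/
def depthRegion (Z : Fin n → E d) (k : ℕ) : Set (E d) :=
  {x | ∀ u, k ≤ sideCount Z u x}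

variable {Z : Fin n → E d} {x : E d} {k : ℕ}

lemma convex_depthRegion (Z : Fin n → E d) (k : ℕ) : Convex ℝ (depthRegion Z k) := by
  intro x hx y hy a b ha hb hab u
  have hmin : min ⟪u, x⟫ ⟪u, y⟫ ≤ ⟪u, a • x + b • y⟫ := by
    rw [inner_add_right, real_inner_smul_right, real_inner_smul_right]
    exact Convex.min_le_combo _ _ ha hb hab
  rcases min_le_iff.1 hmin with h | h
  · exact (hx u).trans (sideCount_mono h)
  · exact (hy u).trans (sideCount_mono h)

lemma isClosed_depthRegion (Z : Fin n → E d) (k : ℕ) : IsClosed (depthRegion Z k) := by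
  rw [depthRegion, Set.ofPred_forall]
  exact isClosed_iInter fun u =>
    ((upperSemicontinuous_sideCount Z).comp (Continuous.prodMk_right u)).isClosed_preimage k

lemma depthRegion_subset_convexHull (hk : 1 ≤ k) :
    depthRegion Z k ⊆ convexHull ℝ (Set.range Z) := by
  intro x hx
  by_contra hnot
  obtain ⟨u, hu⟩ := exists_sideCount_eq_zero hnot
  have := hx u
  omega

lemma isCompact_depthRegion (hk : 1 ≤ k) : IsCompact (depthRegion Z k) :=
  ((Set.finite_range Z).isCompact_convexHull ℝ).of_isClosed_subset (isClosed_depthRegion Z k)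
    (depthRegion_subset_convexHull hk)

lemma depth_le_sideCount_div {u : E d} (hu : ‖u‖ = 1) :
    depth Z x ≤ (sideCount Z u x : ℝ) / n :=
  csInf_le ⟨0, by rintro _ ⟨_, -, rfl⟩; positivity⟩ ⟨u, hu, rfl⟩

variable [NeZero d]

lemma mem_depthRegion_iff_forall_norm_eq_one :
    x ∈ depthRegion Z k ↔ ∀ u, ‖u‖ = 1 → k ≤ sideCount Z u x := by
  refine ⟨fun h u _ => h u, fun h u => ?_⟩
  rcases eq_or_ne u 0 with rfl | hu
  · obtain ⟨w, hw⟩ := exists_norm_eq (E d) zero_le_one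
    rw [sideCount_zero_left]
    exact (h w hw).trans (sideCount_le Z w x)
  · rw [← sideCount_smul (inv_pos.2 (norm_pos_iff.2 hu))]
    exact h _ (norm_smul_inv_norm hu)

lemma div_le_depth (hx : x ∈ depthRegion Z k) : (k / n : ℝ) ≤ depth Z x := by
  obtain ⟨w, hw⟩ := exists_norm_eq (E d) zero_le_one
  refine le_csInf ⟨_, w, hw, rfl⟩ ?_
  rintro _ ⟨u, -, rfl⟩
  gcongr
  exact hx u

lemma mem_depthRegion_of_div_le_depth (hn : 0 < n) (h : (k / n : ℝ) ≤ depth Z x) :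
    x ∈ depthRegion Z k := by
  refine mem_depthRegion_iff_forall_norm_eq_one.2 fun u hu => ?_
  have := h.trans (depth_le_sideCount_div hu)
  rwa [div_le_div_iff_of_pos_right (by positivity), Nat.cast_le] at this

lemma depth_le_div (hx : x ∉ depthRegion Z (k + 1)) : depth Z x ≤ k / n := by
  simp only [mem_depthRegion_iff_forall_norm_eq_one, not_forall, not_le, Nat.lt_succ_iff] at hx
  obtain ⟨u, hu, hk⟩ := hx
  exact (depth_le_sideCount_div hu).trans (by gcongr)

lemma depth_le_maxDepth (Z : Fin n → E d) (x : E d) : depth Z x ≤ maxDepth Z := by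
  obtain ⟨w, hw⟩ := exists_norm_eq (E d) zero_le_one
  refine le_csSup ⟨1, ?_⟩ ⟨x, rfl⟩
  rintro _ ⟨z, rfl⟩
  exact (depth_le_sideCount_div hw).trans
    (div_le_one_of_le₀ (mod_cast sideCount_le Z w z) n.cast_nonneg)

lemma MSet_subset_depthRegion (hn : 0 < n) (hne : (depthRegion Z k).Nonempty) :
    MSet Z ⊆ depthRegion Z k := by
  obtain ⟨p, hp⟩ := hne
  intro x hx
  refine mem_depthRegion_of_div_le_depth hn ?_
  calc (k / n : ℝ) ≤ depth Z p := div_le_depth hp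
    _ ≤ maxDepth Z := depth_le_maxDepth Z p
    _ = depth Z x := hx.symm

lemma MSet_eq_depthRegion (hn : 0 < n) (hne : (depthRegion Z k).Nonempty)
    (hempty : depthRegion Z (k + 1) = ∅) : MSet Z = depthRegion Z k := by
  refine (MSet_subset_depthRegion hn hne).antisymm fun x hx => ?_
  refine (depth_le_maxDepth Z x).antisymm (csSup_le (Set.range_nonempty _) ?_)
  rintro _ ⟨z, rfl⟩
  exact (depth_le_div (Set.eq_empty_iff_forall_notMem.1 hempty z)).trans (div_le_depth hx)

end DepthRegion

section LowerBound

lemma exists_forall_mem_of_mul_card_compl_lt {ι : Type*} [Fintype ι] [DecidableEq ι] {k : ℕ}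
    {I : Finset (Finset ι)} (hI : I.Nonempty) (hIk : I.card ≤ k)
    (hS : ∀ S ∈ I, k * Sᶜ.card < Fintype.card ι) : ∃ i, ∀ S ∈ I, i ∈ S := by
  by_contra! hcover
  have hunion : (I.biUnion compl) = Finset.univ := by
    simpa [Finset.eq_univ_iff_forall] using hcover
  have hcard : Fintype.card ι ≤ ∑ S ∈ I, Sᶜ.card := by
    simpa only [hunion, Finset.card_univ] using
      Finset.card_biUnion_le (s := I) (t := (compl : Finset ι → Finset ι))
  have : k * Fintype.card ι < k * Fintype.card ι :=
    calc k * Fintype.card ι ≤ ∑ S ∈ I, k * Sᶜ.card := by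
          rw [← Finset.mul_sum]; gcongr
      _ < ∑ _S ∈ I, Fintype.card ι := Finset.sum_lt_sum_of_nonempty hI hS
      _ = I.card * Fintype.card ι := by rw [Finset.sum_const, smul_eq_mul]
      _ ≤ k * Fintype.card ι := by gcongr
  exact this.false

variable {d n m : ℕ}

/- Helly's theorem for the convex hulls of the subsamples missing fewer than `n / (d + 1)` points:
a halfspace with fewer points than that would be disjoint from the hull of the other points. -/
lemma exists_forall_le_mul_sideCount (Z : Fin n → E d) :
    ∃ x, ∀ u, n ≤ (d + 1) * sideCount Z u x := by
  let large : Finset (Finset (Fin n)) := {S | (d + 1) * Sᶜ.card < n}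
  obtain ⟨x, hx⟩ : (⋂ S ∈ large, convexHull ℝ (Z '' S)).Nonempty := by
    refine Convex.helly_theorem' (𝕜 := ℝ) (fun S _ => convex_convexHull ℝ _) fun I hI hcard => ?_
    rcases I.eq_empty_or_nonempty with rfl | hne
    · simp
    obtain ⟨i, hi⟩ := exists_forall_mem_of_mul_card_compl_lt (k := d + 1) hne
      (by simpa using hcard) fun S hS => by simpa [large] using hI hS
    exact ⟨Z i, Set.mem_iInter₂.2 fun S hS =>
      subset_convexHull ℝ _ (Set.mem_image_of_mem Z (hi S hS))⟩
  refine ⟨x, fun u => ?_⟩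
  by_contra! hfew
  set S := (Finset.univ.filter fun i => ⟪u, Z i⟫ ≤ ⟪u, x⟫)ᶜ with hS
  have hSlarge : S ∈ large := by
    rw [sideCount_eq_card] at hfew
    simpa only [large, hS, Finset.mem_filter_univ, compl_compl] using hfew
  have hopen : Z '' S ⊆ {z | ⟪u, x⟫ < ⟪u, z⟫} := by
    rintro _ ⟨i, hi, rfl⟩
    simpa [hS] using hi
  exact lt_irrefl ⟪u, x⟫ (convexHull_min hopen
    (convex_halfSpace_gt (innerₗ (E d) u).isLinear ⟪u, x⟫) (Set.mem_iInter₂.1 hx S hSlarge))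

lemma MSet_append_subset_convexHull [NeZero d] (h : d * m < n) (X : Fin n → E d)
    (Y : Fin m → E d) : MSet (Fin.append X Y) ⊆ convexHull ℝ (Set.range X) := by
  obtain ⟨p, hp⟩ := exists_forall_le_mul_sideCount (Fin.append X Y)
  have hpmem : p ∈ depthRegion (Fin.append X Y) (m + 1) := fun u => by nlinarith [hp u]
  intro x hx
  by_contra hnot
  obtain ⟨u, hu⟩ := exists_sideCount_eq_zero hnot
  have hdeep : m + 1 ≤ sideCount (Fin.append X Y) u x :=
    MSet_subset_depthRegion (by omega) ⟨p, hpmem⟩ hx u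
  rw [sideCount_append, hu] at hdeep
  have := sideCount_le Y u x
  omega

lemma not_breaksDown_of_mul_lt [NeZero d] (h : d * m < n) (X : Fin n → E d) :
    ¬ breaksDown X m := by
  obtain ⟨R, hR, hXR⟩ :=
    ((Set.finite_range X).isCompact_convexHull ℝ).isBounded.exists_pos_norm_le
  intro hbreak
  obtain ⟨Y, hY⟩ := hbreak (R + ‖TukeyMedian X‖)
  have hmedian : ‖TukeyMedian (Fin.append X Y)‖ ≤ R :=
    norm_setAverage_le hR.le fun x hx => hXR x (MSet_append_subset_convexHull h X Y hx)
  linarith [norm_sub_le (TukeyMedian (Fin.append X Y)) (TukeyMedian X)]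

end LowerBound

section UpperBound

variable {d n m : ℕ} {X : Fin n → E d} {y : E d}

lemma exists_inner_lt_sideCount_le (X : Fin n → E d) {s x : E d} (hxy : x ≠ y)
    (hs : ⟪s, y⟫ = ⟪s, x⟫) : ∃ u, ⟪u, x⟫ < ⟪u, y⟫ ∧ sideCount X u x ≤ sideCount X s x := by
  have htilt : Continuous fun δ : ℝ => (s + δ • (y - x), x) := by fun_prop
  have hcount : ∀ᶠ δ in nhds (0 : ℝ), sideCount X (s + δ • (y - x)) x < sideCount X s x + 1 :=
    (upperSemicontinuous_sideCount X).comp htilt 0 _ (by simp)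
  obtain ⟨δ, hδ, hδpos⟩ := (hcount.filter_mono nhdsWithin_le_nhds |>.and
    (self_mem_nhdsWithin : Set.Ioi (0 : ℝ) ∈ nhdsWithin 0 (Set.Ioi 0))).exists
  refine ⟨s + δ • (y - x), ?_, Nat.lt_succ_iff.1 hδ⟩
  have hgain : 0 < δ * ⟪y - x, y - x⟫ :=
    mul_pos hδpos (real_inner_self_pos.2 (sub_ne_zero.2 hxy.symm))
  rw [← sub_pos, ← inner_sub_right, inner_add_left, real_inner_smul_left, inner_sub_right s, hs]
  linarith

lemma exists_sideCount_append_const_le (hyX : y ∉ convexHull ℝ (Set.range X))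
    (hy : Pairwise fun i j => ¬ Collinear ℝ {y, X i, X j}) (hnm : n ≤ 2 * m) (x : E d) :
    ∃ u, sideCount (Fin.append X fun _ : Fin m => y) u x ≤ m := by
  rcases eq_or_ne x y with rfl | hxy
  · obtain ⟨u, hu⟩ := exists_sideCount_eq_zero hyX
    exact ⟨u, by simp [sideCount_append, hu, sideCount_le]⟩
  obtain ⟨p, hpy, hpX⟩ := exists_inner_eq_ncard_inner_eq_le_one hy x
  obtain ⟨s, hsy, hsX⟩ : ∃ s, ⟪s, y⟫ = ⟪s, x⟫ ∧ sideCount X s x ≤ m := by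
    have hsum := sideCount_add_sideCount_neg X p x
    rcases le_or_gt (sideCount X p x) m with hp | hp
    · exact ⟨p, hpy, hp⟩
    · exact ⟨-p, by simp only [inner_neg_left, hpy], by omega⟩
  obtain ⟨u, hu, huX⟩ := exists_inner_lt_sideCount_le X hxy hsy
  refine ⟨u, ?_⟩
  rw [sideCount_append, sideCount_const, if_neg hu.not_ge, add_zero]
  exact huX.trans hsX

lemma mem_depthRegion_append_const (X : Fin n → E d) (y : E d) :
    y ∈ depthRegion (Fin.append X fun _ : Fin m => y) m := fun u => by
  simp [sideCount_append, sideCount_const]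

lemma MSet_append_const [NeZero d] (hm : 0 < m) (hnm : n ≤ 2 * m)
    (hyX : y ∉ convexHull ℝ (Set.range X))
    (hy : Pairwise fun i j => ¬ Collinear ℝ {y, X i, X j}) :
    MSet (Fin.append X fun _ : Fin m => y) = depthRegion (Fin.append X fun _ : Fin m => y) m := by
  refine MSet_eq_depthRegion (by omega) ⟨y, mem_depthRegion_append_const X y⟩ ?_
  refine Set.eq_empty_iff_forall_notMem.2 fun x hx => ?_
  obtain ⟨u, hu⟩ := exists_sideCount_append_const_le hyX hy hnm x
  exact (hx u).not_gt (Nat.lt_succ_of_le hu)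

lemma le_norm_tukeyMedian_append_const [NeZero d] (hm : 0 < m) (hnm : n ≤ 2 * m)
    (hy : Pairwise fun i j => ¬ Collinear ℝ {y, X i, X j}) {R : ℝ} (hR : 0 ≤ R)
    (hX : ∀ i, ‖X i‖ ≤ R) (hRy : R < ‖y‖) :
    (‖y‖ + R) / 2 ^ (d + 1) - R ≤ ‖TukeyMedian (Fin.append X fun _ : Fin m => y)‖ := by
  have hball : Set.range X ⊆ Metric.closedBall 0 R := by
    rintro _ ⟨i, rfl⟩
    exact mem_closedBall_zero_iff.2 (hX i)
  have hyX : y ∉ convexHull ℝ (Set.range X) := fun hmem =>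
    hRy.not_ge (mem_closedBall_zero_iff.1 (convexHull_min hball (convex_closedBall 0 R) hmem))
  rw [TukeyMedian, MSet_append_const hm hnm hyX hy]
  refine le_norm_setAverage_of_subset_convexHull (convex_depthRegion _ m)
    (isCompact_depthRegion hm) hR (mem_depthRegion_append_const X y)
    ((depthRegion_subset_convexHull hm).trans ?_)
  refine convexHull_mono ?_
  rintro _ ⟨i, rfl⟩
  refine i.addCases (fun i => ?_) (fun j => ?_)
  · exact .inr (by simpa using hX i)
  · exact .inl (Fin.append_right X _ j)

lemma breaksDown_of_le (hd : 2 ≤ d) (hm : 0 < m) (hnm : n ≤ 2 * m)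
    (hX : Function.Injective X) : breaksDown X m := by
  have : NeZero d := ⟨by omega⟩
  obtain ⟨R, hR, hXR⟩ := (Set.finite_range X).isBounded.exists_pos_norm_le
  intro C
  obtain ⟨y, hyC, hy⟩ := exists_lt_norm_pairwise_not_collinear
    (by simpa using Nat.lt_of_succ_le hd) hX (max R (2 ^ (d + 1) * (C + ‖TukeyMedian X‖ + R)))
  obtain ⟨hRy, hCy⟩ := max_lt_iff.1 hyC
  refine ⟨fun _ => y, ?_⟩
  have hmedian := le_norm_tukeyMedian_append_const hm hnm hy hR.le (fun i => hXR _ ⟨i, rfl⟩) hRy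
  have hfar : C + ‖TukeyMedian X‖ + R < (‖y‖ + R) / 2 ^ (d + 1) := by
    rw [lt_div_iff₀ (by positivity)]
    linarith
  linarith [norm_sub_norm_le (TukeyMedian (Fin.append X fun _ : Fin m => y)) (TukeyMedian X)]

end UpperBound

/- Two equal sample points count twice on a hyperplane through them and `d - 1` further points. -/
lemma inGeneralPosition.injective {d n : ℕ} [NeZero d] {X : Fin n → E d}
    (hX : inGeneralPosition X) (hdn : d < n) : Function.Injective X := by
  intro i j hij
  by_contra hne
  have hd : 0 < d := NeZero.pos d
  obtain ⟨s, his, hsj, hs⟩ : ∃ s : Finset (Fin n), {i} ⊆ s ∧ s ⊆ {j}ᶜ ∧ s.card = d :=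
    Finset.exists_subsuperset_card_eq (by simpa using Ne.symm hne)
      (by simpa using Nat.succ_le_of_lt hd)
      (by simpa [Finset.card_compl] using Nat.le_sub_one_of_lt hdn)
  set W := vectorSpan ℝ (s.image X : Set (E d))
  have hW : W ≠ ⊤ := by
    intro htop
    have hrank : Module.finrank ℝ W ≤ d - 1 :=
      finrank_vectorSpan_image_finset_le ℝ X s (by omega)
    rw [htop, finrank_top, finrank_euclideanSpace_fin] at hrank
    omega
  obtain ⟨v, hv, hv0⟩ := Submodule.exists_mem_ne_zero_of_ne_bot
    (mt Submodule.orthogonal_eq_bot_iff.1 hW)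
  have hmem {a : Fin n} (ha : a ∈ s) : X a ∈ (s.image X : Set (E d)) :=
    Finset.mem_image_of_mem X ha
  have hsub : (insert j s : Set (Fin n)) ⊆ {a | ⟪v, X a⟫ = ⟪v, X i⟫} := by
    rintro a (rfl | ha)
    · exact congrArg (inner ℝ v) hij.symm
    · rw [Set.mem_ofPred_eq, ← sub_eq_zero, ← inner_sub_right]
      exact Submodule.inner_left_of_mem_orthogonal
        (vsub_mem_vectorSpan ℝ (hmem ha) (hmem (Finset.singleton_subset_iff.1 his))) hv
  have hle := (Set.ncard_le_ncard hsub (Set.toFinite _)).trans (hX v hv0 _)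
  have hjs : j ∉ s := fun hj => by simpa using hsj hj
  rw [← Finset.coe_insert, Set.ncard_coe_finset, Finset.card_insert_of_notMem hjs] at hle
  omega

lemma breaksDown_iff {n m : ℕ} (hn : 0 < n) {X : Fin n → E 2} (hX : Function.Injective X) :
    breaksDown X m ↔ n ≤ 2 * m := by
  refine ⟨fun h => ?_, fun h => breaksDown_of_le le_rfl (by omega) h hX⟩
  by_contra! hlt
  exact not_breaksDown_of_mul_lt hlt X h

lemma FSBP_eq_of_breaksDown_iff {d n k : ℕ} {X : Fin n → E d} (hk : 1 ≤ k)
    (h : ∀ m, breaksDown X m ↔ k ≤ m) : FSBP X = k / (n + k) := by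
  refine IsLeast.csInf_eq ⟨⟨k, hk, (h k).2 le_rfl, rfl⟩, ?_⟩
  rintro _ ⟨m, hm, hbreak, rfl⟩
  have hkm : (k : ℝ) ≤ m := mod_cast (h m).1 hbreak
  rw [div_le_div_iff₀ (by positivity) (by positivity)]
  nlinarith [(n.cast_nonneg : (0 : ℝ) ≤ n)]

theorem remark31_general {n : ℕ} (hn : 0 < n) (X : Fin n → E 2) (hX : Function.Injective X) :
    FSBP X = ((⌈(n : ℝ) / 2⌉ : ℝ)) / ((n : ℝ) + (⌈(n : ℝ) / 2⌉ : ℝ)) := by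
  have hceil : ((⌈(n : ℝ) / 2⌉₊ : ℝ)) = (⌈(n : ℝ) / 2⌉ : ℝ) :=
    natCast_ceil_eq_intCast_ceil (by positivity)
  rw [← hceil]
  refine FSBP_eq_of_breaksDown_iff (Nat.ceil_pos.2 (by positivity)) fun m => ?_
  rw [breaksDown_iff hn hX, Nat.ceil_le, div_le_iff₀' two_pos]
  norm_cast

/-- **Remark 3.1.** For a sample in general position in `ℝ²` with `n ≥ 3`,
the finite sample breakdown point of Tukey's halfspace median is
`ε(T*, Xⁿ) = ⌈n/2⌉ / (n + ⌈n/2⌉)`. -/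
theorem remark31 {n : ℕ} (hn : 3 ≤ n) (X : Fin n → E 2)
    (hX : inGeneralPosition X) :
    FSBP X = ((⌈(n : ℝ) / 2⌉ : ℝ)) / ((n : ℝ) + (⌈(n : ℝ) / 2⌉ : ℝ)) :=
  remark31_general (by omega) X (hX.injective hn)
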